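/- Let u ≥ 1 and f : ℕ → ℂ with 𝒱_u(f) = 1, and let w be the associated variation function. Then there exists a continuous function ρ : [0,1] → ℂ such that |ρ(t) − ρ(s)| ≤ 3 |t − s|^{1/u} for all s, t ∈ [0,1] and ρ(w(n)) = f(n) for every n ∈ ℕ. -/

import Mathlib

open scoped ENNReal

/-- The `u`-variation `𝒱_u(m)` of a sequence `m : ℕ → ℂ`, as a value in `[0,∞]`. -/
noncomputable def eVar (u : ℝ) (m : ℕ → ℂ) : ℝ≥0∞ :=
  ⨆ (N : ℕ) (j : Fin (N + 1) → ℕ) (_ : StrictMono j),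
    (∑ i : Fin N, (ENNReal.ofReal ‖m (j i.succ) - m (j i.castSucc)‖) ^ u) ^ (1 / u)

/-- The variation function `w` associated to `f`: `w n` is the supremum over all
strings `0 ≤ j 0 < ⋯ < j N ≤ n` of `∑_{i=1}^N |f (j i) - f (j (i-1))|^u`
(for `n = 0` only the trivial strings occur and `w 0 = 0`). -/
noncomputable def varFun (u : ℝ) (f : ℕ → ℂ) (n : ℕ) : ℝ :=
  sSup {x : ℝ | ∃ (N : ℕ) (j : Fin (N + 1) → ℕ), StrictMono j ∧ (∀ i, j i ≤ n) ∧
    x = ∑ i : Fin N, ‖f (j i.succ) - f (j i.castSucc)‖ ^ u}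

/-!
Appending `n` to a string that ends at `m < n` shows `w m + |f n - f m| ^ u ≤ w n`, so `f` is a
`1/u`-Hölder function of `w`, with constant `1`. Since `1/u ≤ 1`, real-valued Hölder functions are
Lipschitz for the snowflake metric `|t - s| ^ (1/u)` and extend by McShane's theorem with the same
constant. Extending the real and the imaginary part separately costs a factor `√2`.
-/

section HolderExtension

open Set
open scoped NNReal

variable {X : Type*} {C r : ℝ≥0}

theorem holderWith_complex_mk [PseudoEMetricSpace X] {g h : X → ℝ} (hg : HolderWith C r g)
    (hh : HolderWith C r h) :
    HolderWith (NNReal.sqrt 2 * C) r fun x => (⟨g x, h x⟩ : ℂ) := fun x y => calc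
  edist (⟨g x, h x⟩ : ℂ) ⟨g y, h y⟩
      ≤ NNReal.sqrt 2 * max (edist (g x) (g y)) (edist (h x) (h y)) :=
        Complex.antilipschitz_equivRealProd _ _
  _ ≤ NNReal.sqrt 2 * (C * edist x y ^ (r : ℝ)) := by gcongr; exact max_le (hg x y) (hh x y)
  _ = ↑(NNReal.sqrt 2 * C) * edist x y ^ (r : ℝ) := by rw [ENNReal.coe_mul, mul_assoc]

variable [PseudoMetricSpace X]

theorem exists_holderWith_eqOn_real {f : X → ℝ} {s : Set X} (hr₀ : 0 < r) (hr₁ : r ≤ 1)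
    (hf : HolderOnWith C r f s) : ∃ g : X → ℝ, HolderWith C r g ∧ EqOn f g s := by
  let toX : Metric.Snowflaking X r (NNReal.coe_pos.2 hr₀) (NNReal.coe_le_one.2 hr₁) → X :=
    Metric.Snowflaking.ofSnowflaking
  have hf_snowflake : LipschitzOnWith C (f ∘ toX) (toX ⁻¹' s) :=
    fun x hx y hy => hf (toX x) hx (toX y) hy
  obtain ⟨g, hg, hfg⟩ := hf_snowflake.extend_real
  exact ⟨g ∘ Metric.Snowflaking.toSnowflaking, fun x y => hg _ _, fun x hx => hfg hx⟩

theorem exists_holderWith_eqOn_complex {f : X → ℂ} {s : Set X} (hr₀ : 0 < r) (hr₁ : r ≤ 1)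
    (hf : HolderOnWith C r f s) :
    ∃ g : X → ℂ, HolderWith (NNReal.sqrt 2 * C) r g ∧ EqOn f g s := by
  have hprod : HolderOnWith C r (Complex.equivRealProd ∘ f) s := fun x hx y hy =>
    (Complex.lipschitz_equivRealProd _ _).trans <| by simpa using hf x hx y hy
  have hre : HolderOnWith C r (fun x => (f x).re) s := fun x hx y hy =>
    (le_max_left _ _).trans (hprod x hx y hy)
  have him : HolderOnWith C r (fun x => (f x).im) s := fun x hx y hy =>
    (le_max_right _ _).trans (hprod x hx y hy)
  obtain ⟨g, hg, hfg⟩ := exists_holderWith_eqOn_real hr₀ hr₁ hre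
  obtain ⟨h, hh, hfh⟩ := exists_holderWith_eqOn_real hr₀ hr₁ him
  exact ⟨fun x => ⟨g x, h x⟩, holderWith_complex_mk hg hh,
    fun x hx => Complex.ext (hfg hx) (hfh hx)⟩

theorem exists_holderWith_comp_eq {ι : Type*} {w : ι → X} {f : ι → ℂ} (hr₀ : 0 < r) (hr₁ : r ≤ 1)
    (hf : ∀ i j, dist (f i) (f j) ≤ C * dist (w i) (w j) ^ (r : ℝ)) :
    ∃ ρ : X → ℂ, HolderWith (NNReal.sqrt 2 * C) r ρ ∧ ∀ i, ρ (w i) = f i := by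
  have hfw : f.FactorsThrough w := fun i j hij =>
    dist_le_zero.1 <| by simpa [hij, hr₀.ne'] using hf i j
  have hfactor : ∀ i, Function.extend w f 0 (w i) = f i := hfw.extend_apply 0
  have hholder : HolderOnWith C r (Function.extend w f 0) (range w) := by
    rintro _ ⟨i, rfl⟩ _ ⟨j, rfl⟩
    rw [hfactor, hfactor, edist_nndist, edist_nndist,
      ← ENNReal.coe_rpow_of_nonneg _ r.coe_nonneg]
    exact_mod_cast hf i j
  obtain ⟨ρ, hρ, hρw⟩ := exists_holderWith_eqOn_complex hr₀ hr₁ hholder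
  exact ⟨ρ, hρ, fun i => (hρw (mem_range_self i)).symm.trans (hfactor i)⟩

end HolderExtension

section VariationSum

variable {ι E : Type*} [SeminormedAddCommGroup E] {N : ℕ}

/-- The sum of the `u`-th powers of the increments of `f` along the string `j 0, …, j N`; both
`eVar` and `varFun` are suprema built from these sums. -/
noncomputable def variationSum (u : ℝ) (f : ι → E) (j : Fin (N + 1) → ι) : ℝ :=
  ∑ i : Fin N, ‖f (j i.succ) - f (j i.castSucc)‖ ^ u

theorem variationSum_snoc (u : ℝ) (f : ι → E) (j : Fin (N + 1) → ι) (n : ι) :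
    variationSum u f (Fin.snoc j n : Fin (N + 2) → ι) =
      variationSum u f j + ‖f n - f (j (Fin.last N))‖ ^ u := by
  simp only [variationSum, Fin.sum_univ_castSucc (n := N), Fin.succ_castSucc, Fin.snoc_castSucc,
    Fin.succ_last, Fin.snoc_last]

theorem strictMono_snoc [Preorder ι] {j : Fin (N + 1) → ι} {n : ι} (hj : StrictMono j)
    (hn : j (Fin.last N) < n) : StrictMono (Fin.snoc j n : Fin (N + 2) → ι) := by
  rw [Fin.strictMono_iff_lt_succ]
  intro i
  cases i using Fin.lastCases with
  | last => simpa only [Fin.succ_last, Fin.snoc_last, Fin.snoc_castSucc] using hn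
  | cast i =>
    simpa only [Fin.succ_castSucc, Fin.snoc_castSucc] using hj Fin.castSucc_lt_succ

end VariationSum

section VariationFunction

variable {u : ℝ} {f : ℕ → ℂ} {m n N : ℕ} {j : Fin (N + 1) → ℕ}

theorem ofReal_variationSum_le_eVar_rpow (hu : 0 < u) (hj : StrictMono j) :
    ENNReal.ofReal (variationSum u f j) ≤ eVar u f ^ u := by
  have hsum : ENNReal.ofReal (variationSum u f j) =
      ∑ i : Fin N, ENNReal.ofReal ‖f (j i.succ) - f (j i.castSucc)‖ ^ u := by
    rw [variationSum, ENNReal.ofReal_sum_of_nonneg fun i _ => by positivity]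
    simp only [ENNReal.ofReal_rpow_of_nonneg (norm_nonneg _) hu.le]
  rw [hsum, ← ENNReal.rpow_inv_le_iff hu, ← one_div]
  exact le_iSup_of_le N (le_iSup₂_of_le j hj le_rfl)

theorem variationSum_le_varFun (hu : 0 < u) (hf : eVar u f ≠ ∞) (hj : StrictMono j)
    (hjn : j (Fin.last N) ≤ n) : variationSum u f j ≤ varFun u f n := by
  refine le_csSup ⟨(eVar u f ^ u).toReal, ?_⟩
    ⟨N, j, hj, fun i => (hj.monotone i.le_last).trans hjn, rfl⟩
  rintro _ ⟨N, j, hj, -, rfl⟩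
  exact (ENNReal.ofReal_le_iff_le_toReal (ENNReal.rpow_ne_top_of_nonneg hu.le hf)).1
    (ofReal_variationSum_le_eVar_rpow hu hj)

theorem varFun_le_of_forall_last_eq {c : ℝ}
    (h : ∀ (N : ℕ) (j : Fin (N + 1) → ℕ), StrictMono j → j (Fin.last N) = n →
      variationSum u f j ≤ c) : varFun u f n ≤ c := by
  refine csSup_le
    ⟨_, 0, fun _ => n, Subsingleton.strictMono (α := Fin 1) _, fun _ => le_rfl, rfl⟩ ?_
  rintro _ ⟨N, j, hj, hjn, rfl⟩
  rcases (hjn (Fin.last N)).eq_or_lt with hlast | hlast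
  · exact h N j hj hlast
  · calc variationSum u f j
        ≤ variationSum u f j + ‖f n - f (j (Fin.last N))‖ ^ u :=
          le_add_of_nonneg_right (by positivity)
      _ = variationSum u f (Fin.snoc j n : Fin (N + 2) → ℕ) := (variationSum_snoc u f j n).symm
      _ ≤ c := h _ _ (strictMono_snoc hj hlast) (Fin.snoc_last ..)

theorem varFun_add_norm_sub_rpow_le (hu : 0 < u) (hf : eVar u f ≠ ∞) (hmn : m < n) :
    varFun u f m + ‖f n - f m‖ ^ u ≤ varFun u f n := by
  rw [← le_sub_iff_add_le]
  refine varFun_le_of_forall_last_eq fun N j hj hlast => ?_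
  rw [le_sub_iff_add_le, ← hlast, ← variationSum_snoc]
  exact variationSum_le_varFun hu hf (strictMono_snoc hj (hlast ▸ hmn)) (Fin.snoc_last ..).le

theorem dist_le_dist_varFun_rpow (hu : 0 < u) (hf : eVar u f ≠ ∞) (m n : ℕ) :
    dist (f m) (f n) ≤ dist (varFun u f m) (varFun u f n) ^ (1 / u) := by
  wlog hmn : m < n generalizing m n
  · rcases (not_lt.1 hmn).eq_or_lt with rfl | hnm
    · rw [dist_self]; positivity
    · simpa only [dist_comm] using this n m hnm
  rw [one_div, Real.le_rpow_inv_iff_of_pos dist_nonneg dist_nonneg hu, dist_comm, dist_eq_norm,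
    dist_comm]
  exact (le_sub_iff_add_le'.2 (varFun_add_norm_sub_rpow_le hu hf hmn)).trans (le_abs_self _)

end VariationFunction

theorem haar_stmt6_general (u : ℝ) (hu : 1 ≤ u) (f : ℕ → ℂ) (hf : eVar u f ≠ ∞) :
    ∃ ρ : ℝ → ℂ, Continuous ρ ∧ (∀ s t : ℝ, ‖ρ t - ρ s‖ ≤ √2 * |t - s| ^ (1 / u)) ∧
      ∀ n : ℕ, ρ (varFun u f n) = f n := by
  have hu₀ : 0 < u := one_pos.trans_le hu
  obtain ⟨r, hr⟩ : ∃ r : NNReal, (r : ℝ) = 1 / u := ⟨⟨1 / u, by positivity⟩, rfl⟩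
  have hr₀ : 0 < r := by rw [← NNReal.coe_pos, hr]; positivity
  have hr₁ : r ≤ 1 := by rw [← NNReal.coe_le_one, hr]; exact div_le_one_of_le₀ hu hu₀.le
  obtain ⟨ρ, hρ, hρw⟩ := exists_holderWith_comp_eq (C := 1) hr₀ hr₁ fun m n => by
    simpa only [NNReal.coe_one, one_mul, hr] using dist_le_dist_varFun_rpow hu₀ hf m n
  refine ⟨ρ, hρ.continuous hr₀, fun s t => ?_, hρw⟩
  simpa [hr, dist_eq_norm] using hρ.dist_le t s

/-- Let `u ≥ 1` and `f : ℕ → ℂ` with `𝒱_u(f) = 1`, and let `w` be the associated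
variation function. Then there is a continuous `ρ : [0,1] → ℂ` with
`|ρ t - ρ s| ≤ 3 |t - s|^(1/u)` on `[0,1]` and `ρ (w n) = f n` for all `n`. -/
theorem haar_stmt6 (u : ℝ) (hu : 1 ≤ u) (f : ℕ → ℂ) (hf : eVar u f = 1) :
    ∃ ρ : ℝ → ℂ, ContinuousOn ρ (Set.Icc 0 1) ∧
      (∀ s ∈ Set.Icc (0:ℝ) 1, ∀ t ∈ Set.Icc (0:ℝ) 1,
        ‖ρ t - ρ s‖ ≤ 3 * |t - s| ^ (1 / u)) ∧
      ∀ n : ℕ, ρ (varFun u f n) = f n := by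
  obtain ⟨ρ, hcont, hρ, hρw⟩ := haar_stmt6_general u hu f (hf ▸ ENNReal.one_ne_top)
  have hsqrt : √2 ≤ (3 : ℝ) := Real.sqrt_le_iff.2 (by norm_num)
  exact ⟨ρ, hcont.continuousOn, fun s _ t _ => (hρ s t).trans (by gcongr), hρw⟩
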